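/- arXiv:0810.2113 — 2 statements merged into one kernel-verified Lean document; each statement's English description precedes it below -/
import Mathlib

section
/- For real x ≥ 2, ∑_{n ≤ x} d(n)/√n ≤ 2·√x·log x − 1.691·√x + 2·log x + 5.846. -/
open Finset

lemma hs_upper (n : ℕ) (hn : 1 ≤ n) :
    Real.log ((n:ℝ)+1) - Real.log n ≤ (1/(n:ℝ) + 1/((n:ℝ)+1))/2 := by
  have h0 : (0:ℝ) < n := by exact_mod_cast hn
  have h := Real.self_le_sinh_iff.2 (Real.log_nonneg (x := ((n:ℝ)+1)/n)
    (by rw [le_div_iff₀ h0]; linarith))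
  rw [Real.sinh_log (by positivity), Real.log_div (by positivity) (by positivity)] at h
  refine h.trans (le_of_eq ?_)
  field_simp
  ring

lemma hs_lower (n : ℕ) (hn : 1 ≤ n) :
    (1/(n:ℝ) + 1/((n:ℝ)+1))/2 - (1/(n:ℝ)^2 - 1/((n:ℝ)+1)^2)/12
      ≤ Real.log ((n:ℝ)+1) - Real.log n := by
  have h0 : (0:ℝ) < n := by exact_mod_cast hn
  have h := Real.hasSum_log_one_add_inv h0
  have h2 := sum_le_hasSum (Finset.range 2) (fun i _ => by positivity) h
  have e : (1:ℝ) + (n:ℝ)⁻¹ = ((n:ℝ)+1)/n := by field_simp; try ring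
  rw [e, Real.log_div (by positivity) (by positivity)] at h2
  refine le_trans ?_ h2
  simp only [Finset.sum_range_succ, Finset.sum_range_zero]
  norm_num
  rw [← sub_nonneg]
  have : ∀ m : ℝ, 0 < m → 0 ≤ 2 * (2 * m + 1)⁻¹ + 2 / 3 * ((2 * m + 1) ^ 3)⁻¹ - ((m⁻¹ + (m + 1)⁻¹) / 2 - ((m ^ 2)⁻¹ - ((m + 1) ^ 2)⁻¹) / 12) := by
    intro m hm
    have : 2 * (2 * m + 1)⁻¹ + 2 / 3 * ((2 * m + 1) ^ 3)⁻¹ - ((m⁻¹ + (m + 1)⁻¹) / 2 - ((m ^ 2)⁻¹ - ((m + 1) ^ 2)⁻¹) / 12)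
      = (2*m^2+2*m+1) / (12*m^2*(m+1)^2*(2*m+1)^3) := by
      field_simp
      ring
    rw [this]; positivity
  linarith [this n h0]

noncomputable def Hs (n : ℕ) : ℝ := ∑ i ∈ Icc 1 n, 1/(i:ℝ)
noncomputable def Fs (n : ℕ) : ℝ := ∑ i ∈ Icc 1 n, 1/Real.sqrt i

lemma Hs_succ (n : ℕ) : Hs (n+1) = Hs n + 1/((n:ℝ)+1) := by
  simp [Hs, Finset.sum_Icc_succ_top]
lemma Fs_succ (n : ℕ) : Fs (n+1) = Fs n + 1/Real.sqrt ((n:ℝ)+1) := by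
  simp [Fs, Finset.sum_Icc_succ_top]

lemma Hb_mono (n m : ℕ) (hn : 1 ≤ n) (h : n ≤ m) :
    Hs n - Real.log n - 1/(2*n) ≤ Hs m - Real.log m - 1/(2*m) := by
  induction m, h using Nat.le_induction with
  | base => rfl
  | succ k hk ih =>
    refine ih.trans ?_
    have := hs_upper k (hn.trans hk)
    rw [Hs_succ]
    push_cast
    have e1 : 1/(2*((k:ℝ)+1)) = 1/((k:ℝ)+1)/2 := by rw [div_div, mul_comm]
    have e2 : 1/(2*(k:ℝ)) = 1/(k:ℝ)/2 := by rw [div_div, mul_comm]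
    rw [e1, e2]
    linarith

lemma Ha_anti (n m : ℕ) (hn : 1 ≤ n) (h : n ≤ m) :
    Hs m - Real.log m - 1/(2*m) + 1/(m:ℝ)^2/12 ≤ Hs n - Real.log n - 1/(2*n) + 1/(n:ℝ)^2/12:= by
  induction m, h using Nat.le_induction with
  | base => rfl
  | succ k hk ih =>
    refine le_trans ?_ ih
    have := hs_lower k (hn.trans hk)
    rw [Hs_succ]
    push_cast
    have e1 : 1/(2*((k:ℝ)+1)) = 1/((k:ℝ)+1)/2 := by rw [div_div, mul_comm]
    have e2 : 1/(2*(k:ℝ)) = 1/(k:ℝ)/2 := by rw [div_div, mul_comm]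
    rw [e1, e2]
    linarith

lemma Hs_le (n : ℕ) (hn : 1 ≤ n) : Hs n ≤ Real.log n + 0.57725 + 1/(2*n) := by
  have h1 := Hb_mono n (max n 8) hn (le_max_left _ _)
  have h2 := Ha_anti 8 (max n 8) (by norm_num) (le_max_right _ _)
  have h3 : (0:ℝ) ≤ 1/((max n 8 : ℕ):ℝ)^2/12 := by positivity
  have h4 : Real.log ((8:ℕ):ℝ) = 3 * Real.log 2 := by
    rw [show ((8:ℕ):ℝ) = 2^3 by norm_num, Real.log_pow]; norm_num
  have h5 : Hs 8 = 761/280 := by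
    simp [Hs, Finset.sum_Icc_succ_top]; norm_num
  have := Real.log_two_gt_d9
  rw [h4, h5] at h2
  norm_num at h2 h1 h3 ⊢
  linarith

lemma Fa_anti (n m : ℕ) (h : n ≤ m) :
    Fs m - 2 * √(m:ℝ) ≤ Fs n - 2 * √(n:ℝ) := by
  induction m, h using Nat.le_induction with
  | base => rfl
  | succ k hk ih =>
    refine le_trans ?_ ih
    rw [Fs_succ]
    push_cast
    set s := √(k:ℝ)
    set t := √((k:ℝ)+1)
    have hs : s^2 = k := Real.sq_sqrt (by positivity)
    have ht : t^2 = k+1 := Real.sq_sqrt (by positivity)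
    have ht0 : 0 < t := by positivity
    have : 1/t ≤ 2*t - 2*s := by
      rw [div_le_iff₀ ht0]; nlinarith [sq_nonneg (t-s)]
    linarith

lemma Fb_mono (n m : ℕ) (hn : 1 ≤ n) (h : n ≤ m) :
    Fs n - 2 * √(n:ℝ) - 1/(2*√(n:ℝ)) ≤ Fs m - 2 * √(m:ℝ) - 1/(2*√(m:ℝ)) := by
  induction m, h using Nat.le_induction with
  | base => rfl
  | succ k hk ih =>
    refine ih.trans ?_
    rw [Fs_succ]
    push_cast
    have hk0 : (0:ℝ) < k := by exact_mod_cast hn.trans hk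
    have hs : √(k:ℝ)^2 = k := Real.sq_sqrt (by positivity)
    have ht : √((k:ℝ)+1)^2 = k+1 := Real.sq_sqrt (by positivity)
    have ht0 : 0 < √((k:ℝ)+1) := by positivity
    have hs0 : 0 < √(k:ℝ) := by positivity
    have hst : √(k:ℝ) ≤ √((k:ℝ)+1) := Real.sqrt_le_sqrt (by linarith)
    generalize √((k:ℝ)+1) = t at *
    generalize √(k:ℝ) = s at *
    have h1 : t^2 - s^2 = 1 := by linarith
    have key : 2*t - 2*s ≤ 1/(2*s) + 1/(2*t) := by
      have : 1/(2*s) + 1/(2*t) - (2*t-2*s) = (t-s)^3/(2*s*t) := by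
        have : 1/(2*s) + 1/(2*t) = (t^2-s^2)/(2*s) + (t^2-s^2)/(2*t) := by rw [h1]
        rw [this]; field_simp; ring
      have h3 : 0 ≤ (t-s)^3/(2*s*t) := by
        have : 0 ≤ t - s := by linarith
        positivity
      linarith
    have e : 1/t = 1/(2*t) + 1/(2*t) := by field_simp; try norm_num
    linarith

lemma hyper (M N : ℕ) (hN : M < (N+1)^2) (hN2 : N^2 ≤ M) :
    ∑ n ∈ Icc 1 M, (n.divisors.card : ℝ) / √(n:ℝ)
      = 2 * ∑ a ∈ Icc 1 N, 1/√(a:ℝ) * Fs (M/a) - Fs N ^ 2 := by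
  set f : ℕ × ℕ → ℝ := fun p => 1/√(p.1:ℝ) * (1/√(p.2:ℝ))
  set P := ((Icc 1 M) ×ˢ (Icc 1 M)).filter (fun p : ℕ × ℕ => p.1 * p.2 ≤ M)
  have hS : ∑ n ∈ Icc 1 M, (n.divisors.card : ℝ) / √(n:ℝ) = ∑ p ∈ P, f p := by
    rw [← Finset.sum_fiberwise_of_maps_to (s := P) (t := Icc 1 M) (g := fun p => p.1 * p.2)]
    · refine Finset.sum_congr rfl fun n hn => ?_
      have hn' := Finset.mem_Icc.1 hn
      have : P.filter (fun p => p.1 * p.2 = n) = n.divisorsAntidiagonal := by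
        ext ⟨a, b⟩
        simp only [P, mem_filter, mem_product, mem_Icc, Nat.mem_divisorsAntidiagonal]
        constructor
        · rintro ⟨_, h⟩; exact ⟨h, by omega⟩
        · rintro ⟨h, h0⟩
          have ha : a ≠ 0 := by rintro rfl; simp at h; omega
          have hb : b ≠ 0 := by rintro rfl; simp at h; omega
          have : a ≤ a * b := Nat.le_mul_of_pos_right _ (by omega)
          have : b ≤ a * b := Nat.le_mul_of_pos_left _ (by omega)
          omega
      rw [this]
      have h2 : ∀ p ∈ n.divisorsAntidiagonal, f p = 1/√(n:ℝ) := by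
        intro p hp
        rw [← (Nat.mem_divisorsAntidiagonal.1 hp).1]
        simp only [f]
        push_cast
        rw [Real.sqrt_mul (by positivity), div_mul_div_comm, one_mul]
      rw [Finset.sum_congr rfl h2, Finset.sum_const, ← Nat.map_div_right_divisors]
      simp [div_eq_mul_inv]
    · rintro ⟨a, b⟩ h
      simp only [P, mem_filter, mem_product, mem_Icc] at h ⊢
      exact ⟨Nat.mul_pos (by omega) (by omega), h.2⟩
  set A := P.filter (fun p => p.1 ≤ N)
  set B := P.filter (fun p => p.2 ≤ N)
  have hNM : N ≤ M := by nlinarith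
  have hAB : A ∪ B = P := by
    ext ⟨a, b⟩
    simp only [A, B, mem_union, mem_filter]
    constructor
    · tauto
    · intro h
      by_cases ha : a ≤ N
      · exact Or.inl ⟨h, ha⟩
      · refine Or.inr ⟨h, ?_⟩
        simp only [P, mem_filter] at h
        by_contra hb
        nlinarith [h.2]
  have hI : A ∩ B = Icc 1 N ×ˢ Icc 1 N := by
    ext ⟨a, b⟩
    simp only [A, B, P, mem_inter, mem_filter, mem_product, mem_Icc]
    constructor
    · tauto
    · rintro ⟨⟨h1, h2⟩, h3, h4⟩
      have : a * b ≤ M := by nlinarith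
      refine ⟨⟨⟨⟨⟨?_, ?_⟩, ?_, ?_⟩, ?_⟩, ?_⟩, ⟨⟨⟨?_, ?_⟩, ?_, ?_⟩, ?_⟩, ?_⟩ <;> omega
  have hB : ∑ p ∈ B, f p = ∑ p ∈ A, f p := by
    refine Finset.sum_bij' (fun p _ => p.swap) (fun p _ => p.swap) ?_ ?_ ?_ ?_ ?_
    · rintro ⟨a, b⟩ h
      simp only [A, B, P, mem_filter, mem_product, Prod.swap] at h ⊢
      rw [mul_comm b a]; tauto
    · rintro ⟨a, b⟩ h
      simp only [A, B, P, mem_filter, mem_product, Prod.swap] at h ⊢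
      rw [mul_comm b a]; tauto
    · simp
    · simp
    · rintro ⟨a, b⟩ h
      simp only [f, Prod.swap]; ring
  have hA : ∑ p ∈ A, f p = ∑ a ∈ Icc 1 N, 1/√(a:ℝ) * Fs (M/a) := by
    rw [Finset.sum_finset_product A (Icc 1 N) (fun a => Icc 1 (M/a))]
    · refine Finset.sum_congr rfl fun a _ => ?_
      rw [Fs, Finset.mul_sum]
    · rintro ⟨a, b⟩
      simp only [A, P, mem_filter, mem_product, mem_Icc]
      constructor
      · rintro ⟨⟨⟨⟨h1, h2⟩, h3, h4⟩, h5⟩, h6⟩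
        exact ⟨⟨h1, h6⟩, h3, (Nat.le_div_iff_mul_le (by omega)).2 (by rw [mul_comm]; exact h5)⟩
      · rintro ⟨⟨h1, h6⟩, h3, h5⟩
        rw [Nat.le_div_iff_mul_le (by omega), mul_comm] at h5
        have : b ≤ a * b := Nat.le_mul_of_pos_left _ (by omega)
        omega
  have hC : ∑ p ∈ Icc 1 N ×ˢ Icc 1 N, f p = Fs N ^ 2 := by
    rw [sq, Fs, Finset.sum_mul_sum, Finset.sum_product]
  have := Finset.sum_union_inter (s₁ := A) (s₂ := B) (f := f)
  rw [hAB, hI, hB, hA, hC] at this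
  rw [hS]; linarith

theorem divisor_sum_sqrt_bound (x : ℝ) (hx : 2 ≤ x) :
    ∑ n ∈ Finset.Icc 1 ⌊x⌋₊, (n.divisors.card : ℝ) / Real.sqrt n
      ≤ 2 * Real.sqrt x * Real.log x - 1.691 * Real.sqrt x + 2 * Real.log x + 5.846 := by
  set M := ⌊x⌋₊ with hM
  set N := Nat.sqrt M with hNdef
  have hM2 : 2 ≤ M := Nat.le_floor (by exact_mod_cast hx)
  have hN2 : N^2 ≤ M := Nat.sqrt_le' M
  have hN3 : M < (N+1)^2 := Nat.lt_succ_sqrt' M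
  have hN1 : 1 ≤ N := Nat.sqrt_pos.2 (by omega)
  have hNM : N ≤ M := Nat.sqrt_le_self M
  have hMx : (M:ℝ) ≤ x := Nat.floor_le (by linarith)
  have hxM : x < M + 1 := Nat.lt_floor_add_one x
  rw [hyper M N hN3 hN2]
  set u := √x with hu
  have hu2 : u^2 = x := Real.sq_sqrt (by linarith)
  have hu0 : 0 < u := Real.sqrt_pos.2 (by linarith)
  have hN0 : (1:ℝ) ≤ N := by exact_mod_cast hN1
  have hNu : (N:ℝ) ≤ u := by
    apply Real.le_sqrt_of_sq_le
    have : ((N:ℝ))^2 ≤ M := by exact_mod_cast hN2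
    linarith
  have huN : u ≤ N + 1 := by
    apply Real.sqrt_le_iff.2 ⟨by linarith, ?_⟩
    have : (M:ℝ) + 1 ≤ ((N:ℝ)+1)^2 := by exact_mod_cast hN3
    linarith
  have hlogx : Real.log x = 2 * Real.log u := by
    rw [← hu2, Real.log_pow]; norm_num
  set c := Fs M - 2 * √(M:ℝ) - 1/(2*√(M:ℝ)) with hc
  have hF1 : Fs 1 = 1 := by simp [Fs]
  have hc1 : -1.5 ≤ c := by
    have := Fb_mono 1 M le_rfl (by omega)
    rw [hF1] at this
    norm_num at this
    norm_num [hc]; linarith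
  have hcA : c ≤ Fs M - 2 * √(M:ℝ) := by
    have : 0 ≤ 1/(2*√(M:ℝ)) := by positivity
    linarith
  have hc2 : c ≤ -1 := by
    have := Fa_anti 1 M (by omega)
    rw [hF1] at this
    norm_num at this
    linarith
  have hcN : 2 * √(N:ℝ) ≤ Fs N - c := by
    have := Fa_anti N M hNM
    linarith
  have hsum : ∑ a ∈ Icc 1 N, 1/√(a:ℝ) * Fs (M/a) ≤ 2 * u * Hs N + N / (2 * u) + c * Fs N := by
    have : 2 * u * Hs N + N / (2 * u) + c * Fs N
      = ∑ a ∈ Icc 1 N, (2 * u * (1/(a:ℝ)) + 1/(2*u) + c * (1/√(a:ℝ))) := by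
      rw [Finset.sum_add_distrib, Finset.sum_add_distrib, ← Finset.mul_sum, ← Finset.mul_sum, Hs, Fs]
      simp [div_eq_mul_inv]
    rw [this]
    refine Finset.sum_le_sum fun a ha => ?_
    have ha' := Finset.mem_Icc.1 ha
    have ha0 : (0:ℝ) < a := by exact_mod_cast ha'.1
    have hm1 : 1 ≤ M / a := (Nat.le_div_iff_mul_le (by omega)).2 (by omega)
    have hm2 : ((M/a : ℕ):ℝ) ≤ x / a := by
      refine Nat.cast_div_le.trans ?_
      gcongr
    have h1 := Fb_mono (M/a) M hm1 (Nat.div_le_self _ _)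
    have hs1 : 1 ≤ √((M/a:ℕ):ℝ) := Real.one_le_sqrt.2 (by exact_mod_cast hm1)
    have hst : √((M/a:ℕ):ℝ) ≤ u / √(a:ℝ) := by
      rw [hu, ← Real.sqrt_div (by linarith)]
      exact Real.sqrt_le_sqrt hm2
    have hr2 : √(a:ℝ)^2 = a := Real.sq_sqrt (by positivity)
    have hr0 : 0 < √(a:ℝ) := by positivity
    rw [← hc] at h1
    generalize √(a:ℝ) = r at *
    rw [← hr2]
    generalize √((M/a:ℕ):ℝ) = s at *
    have hmono : 2 * s + 1/(2*s) ≤ 2 * (u/r) + 1/(2*(u/r)) := by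
      generalize u / r = t at *
      have : 2 * t + 1/(2*t) - (2 * s + 1/(2*s)) = (t - s) * (4*s*t-1)/(2*s*t) := by
        have : 0 < t := by linarith
        field_simp; ring
      have h0 : 0 ≤ (t - s) * (4*s*t-1)/(2*s*t) := by
        have : 0 < t := by linarith
        have : 0 ≤ t - s := by linarith
        have : 0 ≤ 4*s*t-1 := by nlinarith
        positivity
      linarith
    have : 2 * u * (1/r^2) + 1/(2*u) + c * (1/r) = 1/r * (2 * (u/r) + 1/(2*(u/r)) + c) := by
      field_simp
    rw [this]
    gcongr
    linarith
  have hH := Hs_le N hN1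
  have hHu : 4 * u * Hs N ≤ 4 * u * (Real.log N + 0.57725 + 1/(2*N)) := by gcongr
  have hlog : u * Real.log N ≤ u * Real.log u - u + N := by
    have := Real.log_le_sub_one_of_pos (x := (N:ℝ)/u) (by positivity)
    rw [Real.log_div (by positivity) (by positivity)] at this
    have h2 := mul_le_mul_of_nonneg_left this hu0.le
    have : u * (N/u - 1) = N - u := by field_simp
    linarith
  have hsq : 4 * (N:ℝ) ≤ (Fs N - c)^2 := by
    have h1 : √(N:ℝ)^2 = N := Real.sq_sqrt (by positivity)
    have h2 : 0 ≤ √(N:ℝ) := by positivity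
    nlinarith
  have hcc : c^2 ≤ 2.25 := by nlinarith
  have hr : 2 * (u / N) + N / u ≤ 4.5 := by
    have hr1 : 1 ≤ u / N := by rw [le_div_iff₀ (by linarith)]; linarith
    have hr2 : u / N ≤ 2 := by rw [div_le_iff₀ (by linarith)]; linarith
    rw [← inv_div u (N:ℝ)]
    generalize u / N = r at *
    have : 4.5 - (2 * r + r⁻¹) = (2 - r) * (2*r-1/2)/r := by field_simp; ring
    have : 0 ≤ (2 - r) * (2*r-1/2)/r := by
      have : 0 ≤ 2 - r := by linarith
      have : 0 ≤ 2*r-1/2 := by linarith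
      positivity
    linarith
  have e1 : 4 * u * (1/(2*N)) = 2 * (u/N) := by field_simp; try norm_num
  have e2 : 2 * (N/(2*u)) = N/u := by field_simp
  have hl2 : 1.38 ≤ 2 * Real.log x := by
    have := Real.log_le_log (by norm_num) hx
    have := Real.log_two_gt_d9
    norm_num at this ⊢; linarith
  have hl3 : 2 * u * Real.log x = 4 * (u * Real.log u) := by rw [hlogx]; ring
  rw [hl3]
  have e3 : (Fs N - c)^2 = Fs N ^ 2 - 2 * (c * Fs N) + c^2 := by ring
  have e4 : 4 * u * (Real.log N + 0.57725 + 1/(2*N))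
      = 4 * (u * Real.log N) + 2.309 * u + 4 * u * (1/(2*N)) := by ring
  rw [e4, e1] at hHu
  rw [e3] at hsq
  norm_num only at hHu hcc hr hl2 ⊢
  linarith
end

section
/- Let δ > 0 and N ≥ exp(exp(18)). Then ∑_{n > N} d(n)²/n^{2+2δ} ≤ (0.206/N^{1+2δ})·(log³N + 3·log²N + 6·log N + 6). -/
open scoped ENNReal

/-- Indicator of `y < 1`. -/
noncomputable def tailZero (y : ℝ) : ℝ≥0∞ := if y < 1 then 1 else 0

/-- One convolution step of the tail sums. -/
noncomputable def tailStep (a : ℝ) (F : ℝ → ℝ≥0∞) (y : ℝ) : ℝ≥0∞ :=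
  ∑' m : ℕ+, ENNReal.ofReal ((m : ℝ) ^ (-(a + 1))) * F (y / m)

lemma rpow_tel (a : ℝ) (ha : 1 ≤ a) (x : ℝ) (hx : 0 < x) :
    (x + 1) ^ (-(a + 1)) ≤ x ^ (-a) - (x + 1) ^ (-a) := by
  have h1 : (x + 1) ^ (-(a + 1)) = (x + 1) ^ (-a) * (x + 1)⁻¹ := by
    rw [neg_add, Real.rpow_add (by linarith), Real.rpow_neg_one]
  have hp : 0 < (x + 1) ^ (-a) := Real.rpow_pos_of_pos (by linarith) _
  have h2 : x ^ (-a) = (x + 1) ^ (-a) * ((x + 1) / x) ^ a := by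
    rw [Real.div_rpow (by linarith) hx.le, Real.rpow_neg hx.le, Real.rpow_neg (by linarith)]
    have : 0 < (x + 1) ^ a := Real.rpow_pos_of_pos (by linarith) _
    field_simp
  have h3 : (x + 1) / x ≤ ((x + 1) / x) ^ a := by
    conv_lhs => rw [← Real.rpow_one ((x + 1) / x)]
    apply Real.rpow_le_rpow_of_exponent_le _ ha
    rw [le_div_iff₀ hx]; linarith
  have h4 : (x + 1)⁻¹ + 1 ≤ (x + 1) / x := by
    rw [add_div, div_self hx.ne', add_comm, ← one_div]
    gcongr
    linarith
  rw [h1, h2]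
  nlinarith [mul_le_mul_of_nonneg_left (h4.trans h3) hp.le]

lemma tail_one_finite (a : ℝ) (ha : 1 ≤ a) (y : ℝ) (hy : 1 ≤ y) (M : ℕ) :
    ∑ i ∈ Finset.range M, (if y < (i : ℝ) + 1 then ((i : ℝ) + 1) ^ (-(a + 1)) else 0) ≤
      if (M : ℝ) + 1 ≤ y + 1 then 0 else y ^ (-(a + 1)) + y ^ (-a) - (M : ℝ) ^ (-a) := by
  have hy0 : 0 < y := by linarith
  induction M with
  | zero => simp [hy0.le]
  | succ M ih =>
    rw [Finset.sum_range_succ]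
    push_cast
    by_cases h1 : (M : ℝ) + 1 ≤ y
    · rw [if_pos (by linarith)] at ih
      rw [if_neg (not_lt.2 h1), if_pos (by linarith)]
      linarith
    · push Not at h1
      rw [if_pos h1, if_neg (by linarith)]
      by_cases h2 : (M : ℝ) ≤ y
      · rw [if_pos (by linarith)] at ih
        have e1 : ((M : ℝ) + 1) ^ (-(a + 1)) ≤ y ^ (-(a + 1)) :=
          Real.rpow_le_rpow_of_nonpos hy0 h1.le (by linarith)
        have e2 : ((M : ℝ) + 1) ^ (-a) ≤ y ^ (-a) :=
          Real.rpow_le_rpow_of_nonpos hy0 h1.le (by linarith)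
        linarith
      · rw [if_neg (by linarith)] at ih
        have := rpow_tel a ha M (by linarith)
        linarith

lemma tail_one (a : ℝ) (ha : 1 ≤ a) (y : ℝ) (hy : 1 ≤ y) :
    tailStep a tailZero y ≤ ENNReal.ofReal (y ^ (-a) * (1 + 1 / y)) := by
  have hy0 : 0 < y := by linarith
  unfold tailStep tailZero
  rw [tsum_pnat_eq_tsum_succ
    (f := fun m : ℕ => ENNReal.ofReal ((m : ℝ) ^ (-(a + 1))) * if y / m < 1 then 1 else 0)]
  apply ENNReal.tsum_le_of_sum_range_le
  intro M
  have h1 : ∀ i ∈ Finset.range M,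
      (ENNReal.ofReal (((i + 1 : ℕ) : ℝ) ^ (-(a + 1))) * if y / ((i + 1 : ℕ) : ℝ) < 1 then 1 else 0)
      = ENNReal.ofReal (if y < (i : ℝ) + 1 then ((i : ℝ) + 1) ^ (-(a + 1)) else 0) := by
    intro i _
    push_cast
    have : (0 : ℝ) < (i : ℝ) + 1 := by positivity
    simp only [div_lt_one this]
    split_ifs <;> simp
  rw [Finset.sum_congr rfl h1, ← ENNReal.ofReal_sum_of_nonneg]
  · apply ENNReal.ofReal_le_ofReal
    refine (tail_one_finite a ha y hy M).trans ?_
    have e1 : y ^ (-(a + 1)) = y ^ (-a) * (1 / y) := by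
      rw [neg_add, Real.rpow_add hy0, Real.rpow_neg_one, one_div]
    have e2 : 0 ≤ (M : ℝ) ^ (-a) := by positivity
    split_ifs
    · positivity
    · rw [e1]; linarith
  · intro i _
    split_ifs <;> positivity

lemma tail_total (a : ℝ) (ha : 1 ≤ a) :
    ∑' m : ℕ+, ENNReal.ofReal ((m : ℝ) ^ (-(a + 1))) ≤ ENNReal.ofReal 3 := by
  rw [tsum_pnat_eq_tsum_succ (f := fun m : ℕ => ENNReal.ofReal ((m : ℝ) ^ (-(a + 1))))]
  apply ENNReal.tsum_le_of_sum_range_le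
  intro M
  rw [← ENNReal.ofReal_sum_of_nonneg (fun i _ => by positivity)]
  apply ENNReal.ofReal_le_ofReal
  have key : ∀ M : ℕ, ∑ i ∈ Finset.range (M + 1), ((i + 1 : ℕ) : ℝ) ^ (-(a + 1)) ≤
      2 - ((M + 1 : ℕ) : ℝ) ^ (-a) := by
    intro M
    induction M with
    | zero => simp; norm_num
    | succ M ih =>
      rw [Finset.sum_range_succ]
      have := rpow_tel a ha ((M + 1 : ℕ) : ℝ) (by positivity)
      push_cast at *
      linarith
  have h := key M
  rw [Finset.sum_range_succ] at h
  have e1 : 0 ≤ ((M + 1 : ℕ) : ℝ) ^ (-(a + 1)) := by positivity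
  have e2 : 0 ≤ ((M + 1 : ℕ) : ℝ) ^ (-a) := by positivity
  linarith

lemma tail_bdd (a : ℝ) (ha : 1 ≤ a) (F : ℝ → ℝ≥0∞) (Z : ℝ)
    (hF : ∀ y, F y ≤ ENNReal.ofReal Z) (y : ℝ) :
    tailStep a F y ≤ ENNReal.ofReal (3 * Z) := by
  unfold tailStep
  calc _ ≤ ∑' m : ℕ+, ENNReal.ofReal ((m : ℝ) ^ (-(a + 1))) * ENNReal.ofReal Z :=
        ENNReal.tsum_le_tsum fun m => by gcongr; exact hF _
    _ ≤ ENNReal.ofReal 3 * ENNReal.ofReal Z := by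
        rw [ENNReal.tsum_mul_right]; gcongr; exact tail_total a ha
    _ = _ := (ENNReal.ofReal_mul (by norm_num)).symm

lemma log_sum_finite (p q r e y : ℝ) (hp : 0 ≤ p) (hq : 0 ≤ q) (hr : 0 ≤ r)
    (hy : 1 ≤ y) (M : ℕ) (hM : (M : ℝ) + 1 ≤ y) :
    ∑ i ∈ Finset.range (M + 1), (1 / ((i : ℝ) + 1) *
        (p * Real.log (y / ((i : ℝ) + 1)) ^ 2 + q * Real.log (y / ((i : ℝ) + 1)) + r) + e / y)
      + (p * Real.log (y / ((M : ℝ) + 1)) ^ 3 / 3 + q * Real.log (y / ((M : ℝ) + 1)) ^ 2 / 2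
        + r * Real.log (y / ((M : ℝ) + 1)))
      ≤ p * Real.log y ^ 3 / 3 + q * Real.log y ^ 2 / 2 + r * Real.log y
        + (p * Real.log y ^ 2 + q * Real.log y + r) + ((M : ℝ) + 1) * (e / y) := by
  induction M with
  | zero => simp; linarith
  | succ M ih =>
    push_cast at hM
    have ih := ih (by linarith)
    rw [Finset.sum_range_succ]
    push_cast
    have hy0 : 0 < y := by linarith
    have hm : (0 : ℝ) < (M : ℝ) + 1 := by positivity
    set x : ℝ := (M : ℝ) + 1 with hx
    set u := Real.log (y / (x + 1)) with hu
    have hu0 : 0 ≤ u := Real.log_nonneg (by rw [le_div_iff₀ (by linarith)]; linarith)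
    obtain ⟨h, hh⟩ : ∃ h, h = Real.log ((x + 1) / x) := ⟨_, rfl⟩
    have e1 : Real.log (y / x) = u + h := by
      rw [hu, hh, ← Real.log_mul (by positivity) (by positivity)]
      congr 1
      field_simp
    have h1 : 1 / (x + 1) ≤ h := by
      have := Real.one_sub_inv_le_log_of_pos (show 0 < (x + 1) / x by positivity)
      rw [← hh] at this
      refine le_trans (le_of_eq ?_) this
      field_simp
      ring
    have h0 : 0 ≤ h := le_trans (by positivity) h1
    rw [e1] at ih
    have e2 : 1 / (x + 1) * (p * u ^ 2 + q * u + r) ≤ h * (p * u ^ 2 + q * u + r) := by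
      gcongr
    have e3 : 0 ≤ p * (3 * u * h ^ 2 + h ^ 3) / 3 + q * h ^ 2 / 2 := by positivity
    nlinarith

lemma tail_step_bound (a : ℝ) (ha : 1 ≤ a) (F : ℝ → ℝ≥0∞) (p q r e Z : ℝ)
    (hp : 0 ≤ p) (hq : 0 ≤ q) (hr : 0 ≤ r) (he : 0 ≤ e) (hZ : 0 ≤ Z)
    (hF : ∀ y, F y ≤ ENNReal.ofReal Z)
    (hF1 : ∀ y, 1 ≤ y → F y ≤ ENNReal.ofReal
      (y ^ (-a) * (p * Real.log y ^ 2 + q * Real.log y + r + e / y)))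
    (y : ℝ) (hy : 1 ≤ y) :
    tailStep a F y ≤ ENNReal.ofReal (y ^ (-a) *
      (p * Real.log y ^ 3 / 3 + q * Real.log y ^ 2 / 2 + r * Real.log y
        + (p * Real.log y ^ 2 + q * Real.log y + r) + e + 2 * Z)) := by
  have hy0 : 0 < y := by linarith
  have hL : 0 ≤ Real.log y := Real.log_nonneg hy
  set G : ℕ → ℝ := fun i => 1 / ((i : ℝ) + 1) *
        (p * Real.log (y / ((i : ℝ) + 1)) ^ 2 + q * Real.log (y / ((i : ℝ) + 1)) + r) + e / y with hG
  have hGnn : ∀ i : ℕ, (i : ℝ) + 1 ≤ y → 0 ≤ G i := by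
    intro i hi
    have : 0 ≤ Real.log (y / ((i : ℝ) + 1)) :=
      Real.log_nonneg (by rw [le_div_iff₀ (by positivity)]; linarith)
    simp only [hG]
    positivity
  have hterm : ∀ i : ℕ,
      ENNReal.ofReal (((i + 1 : ℕ) : ℝ) ^ (-(a + 1))) * F (y / ((i + 1 : ℕ) : ℝ)) ≤
      (if (i : ℝ) + 1 ≤ y then ENNReal.ofReal (y ^ (-a) * G i) else 0) +
      ENNReal.ofReal (((i + 1 : ℕ) : ℝ) ^ (-(a + 1))) * tailZero (y / ((i + 1 : ℕ) : ℝ))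
        * ENNReal.ofReal Z := by
    intro i
    push_cast
    have hi : (0 : ℝ) < (i : ℝ) + 1 := by positivity
    set x : ℝ := (i : ℝ) + 1 with hx
    by_cases h : x ≤ y
    · rw [if_pos h]
      refine le_trans ?_ le_self_add
      refine (mul_le_mul_right (hF1 (y / x) (by rw [le_div_iff₀ hi]; linarith)) _).trans ?_
      rw [← ENNReal.ofReal_mul (by positivity)]
      apply ENNReal.ofReal_le_ofReal
      apply le_of_eq
      rw [Real.div_rpow hy0.le hi.le, neg_add, Real.rpow_add hi, Real.rpow_neg_one]
      have : 0 < x ^ (-a) := by positivity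
      simp only [hG, ← hx]
      field_simp
    · rw [if_neg h, zero_add]
      have : tailZero (y / x) = 1 := by
        unfold tailZero
        rw [if_pos]
        rw [div_lt_one hi]; linarith
      rw [this, mul_one]
      gcongr
      exact hF _
  unfold tailStep
  rw [tsum_pnat_eq_tsum_succ
    (f := fun m : ℕ => ENNReal.ofReal ((m : ℝ) ^ (-(a + 1))) * F (y / m))]
  refine (ENNReal.tsum_le_tsum hterm).trans ?_
  rw [ENNReal.tsum_add, ENNReal.tsum_mul_right]
  have hT := tail_one a ha y hy
  unfold tailStep at hT
  rw [tsum_pnat_eq_tsum_succ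
    (f := fun m : ℕ => ENNReal.ofReal ((m : ℝ) ^ (-(a + 1))) * tailZero (y / m))] at hT
  have hya : 0 < y ^ (-a) := by positivity
  have hB : ∑' i : ℕ, (if (i : ℝ) + 1 ≤ y then ENNReal.ofReal (y ^ (-a) * G i) else 0) ≤
      ENNReal.ofReal (y ^ (-a) * (p * Real.log y ^ 3 / 3 + q * Real.log y ^ 2 / 2 + r * Real.log y
        + (p * Real.log y ^ 2 + q * Real.log y + r) + e)) := by
    obtain ⟨K, hK⟩ : ∃ K, ⌊y⌋₊ = K + 1 :=
      ⟨⌊y⌋₊ - 1, by have := (Nat.one_le_floor_iff y).2 hy; omega⟩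
    have hKy : (K : ℝ) + 1 ≤ y := by
      have := Nat.floor_le hy0.le
      rw [hK] at this
      exact_mod_cast this
    have hlt : y < (K : ℝ) + 1 + 1 := by
      have := Nat.lt_floor_add_one y
      rw [hK] at this
      exact_mod_cast this
    rw [tsum_eq_sum (s := Finset.range (K + 1))]
    · have hle : ∀ i ∈ Finset.range (K + 1), (i : ℝ) + 1 ≤ y := by
        intro i hi
        have : (i : ℝ) ≤ K := by
          exact_mod_cast Nat.lt_succ_iff.1 (Finset.mem_range.1 hi)
        linarith
      rw [Finset.sum_congr rfl (fun i hi => if_pos (hle i hi)),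
        ← ENNReal.ofReal_sum_of_nonneg (fun i hi => mul_nonneg hya.le (hGnn i (hle i hi))),
        ← Finset.mul_sum]
      apply ENNReal.ofReal_le_ofReal
      apply mul_le_mul_of_nonneg_left _ hya.le
      have h1 := log_sum_finite p q r e y hp hq hr hy K hKy
      have h2 : ((K : ℝ) + 1) * (e / y) ≤ e := by
        calc ((K : ℝ) + 1) * (e / y) ≤ y * (e / y) := by gcongr
          _ = e := by field_simp
      have h3 : 0 ≤ Real.log (y / ((K : ℝ) + 1)) :=
        Real.log_nonneg (by rw [le_div_iff₀ (by positivity)]; linarith)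
      have h4 : 0 ≤ p * Real.log (y / ((K : ℝ) + 1)) ^ 3 / 3
        + q * Real.log (y / ((K : ℝ) + 1)) ^ 2 / 2 + r * Real.log (y / ((K : ℝ) + 1)) := by
        positivity
      simp only [hG]
      linarith
    · intro i hi
      rw [if_neg]
      have : ((K + 1 : ℕ) : ℝ) ≤ i := by
        exact_mod_cast not_lt.1 (fun h => hi (Finset.mem_range.2 h))
      push_cast at this
      linarith
  refine (add_le_add hB (mul_le_mul_left hT _)).trans ?_
  rw [← ENNReal.ofReal_mul (by positivity), ← ENNReal.ofReal_add (by positivity) (by positivity)]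
  apply ENNReal.ofReal_le_ofReal
  have h5 : 1 / y ≤ 1 := by rw [div_le_one hy0]; exact hy
  have h6 : y ^ (-a) * (1 + 1 / y) * Z ≤ y ^ (-a) * 2 * Z := by
    gcongr; linarith
  linarith

lemma tail_four (a : ℝ) (ha : 1 ≤ a) (y : ℝ) (hy : 1 ≤ y) :
    tailStep a (tailStep a (tailStep a (tailStep a tailZero))) y ≤
      ENNReal.ofReal (y ^ (-a) *
        (Real.log y ^ 3 / 6 + 5 * Real.log y ^ 2 + 35 * Real.log y + 80)) := by
  have z0 : ∀ y, tailZero y ≤ ENNReal.ofReal 1 := by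
    intro y; unfold tailZero; split_ifs <;> simp
  have z1 := tail_bdd a ha _ _ z0
  have z2 := tail_bdd a ha _ _ z1
  have z3 := tail_bdd a ha _ _ z2
  have b1 : ∀ y, 1 ≤ y → tailStep a tailZero y ≤ ENNReal.ofReal
      (y ^ (-a) * (0 * Real.log y ^ 2 + 0 * Real.log y + 1 + 1 / y)) := by
    intro y hy
    refine (tail_one a ha y hy).trans (le_of_eq ?_)
    congr 2
    ring
  have b2 : ∀ y, 1 ≤ y → tailStep a (tailStep a tailZero) y ≤ ENNReal.ofReal
      (y ^ (-a) * (0 * Real.log y ^ 2 + 1 * Real.log y + 8 + 0 / y)) := by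
    intro y hy
    refine (tail_step_bound a ha _ 0 0 1 1 _ (by norm_num) (by norm_num) (by norm_num)
      (by norm_num) (by norm_num) z1 b1 y hy).trans (le_of_eq ?_)
    congr 2
    ring
  have b3 : ∀ y, 1 ≤ y → tailStep a (tailStep a (tailStep a tailZero)) y ≤ ENNReal.ofReal
      (y ^ (-a) * ((1 / 2) * Real.log y ^ 2 + 9 * Real.log y + 26 + 0 / y)) := by
    intro y hy
    refine (tail_step_bound a ha _ 0 1 8 0 _ (by norm_num) (by norm_num) (by norm_num)
      (by norm_num) (by norm_num) z2 b2 y hy).trans (le_of_eq ?_)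
    congr 2
    ring
  refine (tail_step_bound a ha _ (1 / 2) 9 26 0 _ (by norm_num) (by norm_num) (by norm_num)
      (by norm_num) (by norm_num) z3 b3 y hy).trans (le_of_eq ?_)
  congr 2
  ring

lemma tsum_antidiag (h : ℕ → ℕ → ℝ≥0∞) :
    ∑' n : ℕ+, ∑ x ∈ (n : ℕ).divisorsAntidiagonal, h x.1 x.2 = ∑' u : ℕ+, ∑' v : ℕ+, h u v := by
  rw [← ENNReal.tsum_prod (f := fun u v : ℕ+ => h u v), ← sigmaAntidiagonalEquivProd.tsum_eq,
    ENNReal.tsum_sigma']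
  refine tsum_congr fun n => ?_
  rw [tsum_fintype, ← Finset.sum_coe_sort]
  rfl

lemma tsum_card_divisors (g : ℕ → ℝ≥0∞) :
    ∑' n : ℕ+, ((n : ℕ).divisors.card : ℝ≥0∞) * g n = ∑' u : ℕ+, ∑' v : ℕ+, g (u * v) := by
  rw [← tsum_antidiag (fun u v => g (u * v))]
  refine tsum_congr fun n => ?_
  rw [Finset.sum_congr rfl (g := fun _ => g n)
    (fun x hx => by rw [(Nat.mem_divisorsAntidiagonal.1 hx).1])]
  rw [Finset.sum_const, nsmul_eq_mul, ← Nat.map_div_right_divisors, Finset.card_map]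

lemma card_divisors_mul_le (u v : ℕ) :
    (u * v).divisors.card ≤ u.divisors.card * v.divisors.card := by
  rw [Nat.divisors_mul]
  exact Finset.card_mul_le

lemma card_sq_le (n : ℕ) : n.divisors.card ^ 2 ≤
    ∑ x ∈ n.divisorsAntidiagonal, x.1.divisors.card * x.2.divisors.card := by
  have h1 : n.divisors.card ^ 2 = ∑ x ∈ n.divisorsAntidiagonal, n.divisors.card := by
    rw [Finset.sum_const, smul_eq_mul, ← Nat.map_div_right_divisors, Finset.card_map, sq]
  rw [h1]
  refine Finset.sum_le_sum fun x hx => ?_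
  conv_lhs => rw [← (Nat.mem_divisorsAntidiagonal.1 hx).1]
  exact card_divisors_mul_le _ _

lemma tsum_sq_le (g : ℕ → ℝ≥0∞) :
    ∑' n : ℕ+, ((n : ℕ).divisors.card : ℝ≥0∞) ^ 2 * g n ≤
      ∑' a : ℕ+, ∑' b : ℕ+, ∑' c : ℕ+, ∑' e : ℕ+, g (a * b * (c * e)) := by
  rw [← tsum_card_divisors (fun u => ∑' c : ℕ+, ∑' e : ℕ+, g (u * (c * e)))]
  have h1 : ∀ u : ℕ+, ((u : ℕ).divisors.card : ℝ≥0∞) * ∑' c : ℕ+, ∑' e : ℕ+, g (u * (c * e))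
      = ∑' v : ℕ+, ((u : ℕ).divisors.card : ℝ≥0∞) * ((v : ℕ).divisors.card * g (u * v)) := by
    intro u
    rw [ENNReal.tsum_mul_left, tsum_card_divisors (fun v => g (u * v))]
  rw [tsum_congr h1, ← tsum_antidiag (fun u v => (u.divisors.card : ℝ≥0∞) *
    (v.divisors.card * g (u * v)))]
  refine ENNReal.tsum_le_tsum fun n => ?_
  have h2 : ∑ x ∈ (n : ℕ).divisorsAntidiagonal, (x.1.divisors.card : ℝ≥0∞) *
      (x.2.divisors.card * g (x.1 * x.2)) =
      ((∑ x ∈ (n : ℕ).divisorsAntidiagonal, x.1.divisors.card * x.2.divisors.card : ℕ) : ℝ≥0∞)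
        * g n := by
    push_cast
    rw [Finset.sum_mul]
    refine Finset.sum_congr rfl fun x hx => ?_
    rw [(Nat.mem_divisorsAntidiagonal.1 hx).1, mul_assoc]
  rw [h2]
  gcongr
  exact_mod_cast card_sq_le n

lemma tail_sq_le (a y : ℝ) :
    ∑' n : ℕ+, ((n : ℕ).divisors.card : ℝ≥0∞) ^ 2 *
      (ENNReal.ofReal ((n : ℝ) ^ (-(a + 1))) * tailZero (y / n)) ≤
    tailStep a (tailStep a (tailStep a (tailStep a tailZero))) y := by
  refine (tsum_sq_le (fun n => ENNReal.ofReal ((n : ℝ) ^ (-(a + 1))) * tailZero (y / n))).trans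
    (le_of_eq ?_)
  unfold tailStep
  simp only [← ENNReal.tsum_mul_left]
  refine tsum_congr fun b => tsum_congr fun c => tsum_congr fun d => tsum_congr fun e => ?_
  push_cast
  rw [Real.mul_rpow (by positivity) (by positivity), Real.mul_rpow (by positivity) (by positivity),
    Real.mul_rpow (by positivity) (by positivity), ENNReal.ofReal_mul (by positivity),
    ENNReal.ofReal_mul (by positivity), ENNReal.ofReal_mul (by positivity)]
  have : y / ((b : ℝ) * c * (d * e)) = y / b / c / d / e := by
    simp only [div_div]; congr 1; ring
  rw [this]
  ring

theorem divisor_sq_tail_bound (δ N : ℝ) (hδ : 0 < δ) (hN : Real.exp (Real.exp 18) ≤ N) :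
    ∑' n : {n : ℕ // N < (n : ℝ)}, ((n : ℕ).divisors.card : ℝ) ^ 2 / (n : ℕ) ^ (2 + 2 * δ)
      ≤ 0.206 / N ^ (1 + 2 * δ) *
        (Real.log N ^ 3 + 3 * Real.log N ^ 2 + 6 * Real.log N + 6) := by
  have hN1 : 1 ≤ N := (Real.one_le_exp (Real.exp_pos _).le).trans hN
  have hN0 : 0 < N := by linarith
  have hL : 200 ≤ Real.log N := by
    have h1 : Real.exp 18 ≤ Real.log N := (Real.le_log_iff_exp_le hN0).2 hN
    have h2 : (2 : ℝ) ≤ Real.exp 1 := by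
      have := Real.add_one_le_exp (1 : ℝ); linarith
    have h3 : Real.exp 18 = Real.exp 1 ^ 18 := by
      rw [← Real.exp_nat_mul]; norm_num
    have h4 : (2 : ℝ) ^ 18 ≤ Real.exp 1 ^ 18 := by gcongr
    norm_num at h4
    linarith
  set a := 1 + 2 * δ with ha
  have ha1 : 1 ≤ a := by linarith
  have h2a : 2 + 2 * δ = a + 1 := by rw [ha]; ring
  rw [h2a]
  set L := Real.log N with hLdef
  have hRHS : N ^ (-a) * (L ^ 3 / 6 + 5 * L ^ 2 + 35 * L + 80) ≤
      0.206 / N ^ a * (L ^ 3 + 3 * L ^ 2 + 6 * L + 6) := by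
    have e : 0.206 / N ^ a * (L ^ 3 + 3 * L ^ 2 + 6 * L + 6) =
        N ^ (-a) * (0.206 * (L ^ 3 + 3 * L ^ 2 + 6 * L + 6)) := by
      rw [Real.rpow_neg hN0.le]; ring
    rw [e]
    gcongr
    have f1 : 200 * L ≤ L ^ 2 := by nlinarith
    have f2 : 200 * L ^ 2 ≤ L ^ 3 := by nlinarith [sq_nonneg L]
    norm_num
    linarith
  refine le_trans ?_ hRHS
  have hBnn : 0 ≤ N ^ (-a) * (L ^ 3 / 6 + 5 * L ^ 2 + 35 * L + 80) := by positivity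
  refine tsum_le_of_sum_le' hBnn fun S => ?_
  rw [← ENNReal.ofReal_le_ofReal_iff hBnn]
  refine le_trans ?_ (tail_four a ha1 N hN1)
  refine le_trans ?_ (tail_sq_le a N)
  rw [ENNReal.ofReal_sum_of_nonneg (fun i _ => by positivity)]
  refine (ENNReal.sum_le_tsum S).trans ?_
  have hpos : ∀ n : {n : ℕ // N < (n : ℝ)}, 0 < (n : ℕ) := fun n => by
    have := hN0.trans n.2
    exact_mod_cast this
  let ι : {n : ℕ // N < (n : ℝ)} → ℕ+ := fun n => ⟨n, hpos n⟩
  have hι : Function.Injective ι := by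
    intro x y hxy
    exact Subtype.ext (congrArg (fun z : ℕ+ => (z : ℕ)) hxy)
  refine le_trans ?_ (ENNReal.tsum_comp_le_tsum_of_injective hι _)
  refine ENNReal.tsum_le_tsum fun n => le_of_eq ?_
  have hn0 : (0 : ℝ) < ((n : ℕ) : ℝ) := by exact_mod_cast hpos n
  have hz : tailZero (N / ((n : ℕ) : ℝ)) = 1 := by
    unfold tailZero
    rw [if_pos]
    rw [div_lt_one hn0]; exact n.2
  change _ = (((n : ℕ).divisors.card : ℕ) : ℝ≥0∞) ^ 2 *
    (ENNReal.ofReal (((n : ℕ) : ℝ) ^ (-(a + 1))) * tailZero (N / ((n : ℕ) : ℝ)))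
  rw [hz, mul_one, div_eq_mul_inv, ← Real.rpow_neg hn0.le, ENNReal.ofReal_mul (by positivity),
    ENNReal.ofReal_pow (by positivity), ENNReal.ofReal_natCast]
end
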